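/- Let ℓ, u ∈ ℤⁿ with ℓ ≤ u componentwise, let 𝒳 = {x ∈ ℤⁿ : ℓ ≤ x ≤ u}, and let h¹, …, hⁿ : 𝒳 → ℝ. Fix j ∈ {1,…,n} and suppose that for every i ∈ {1,…,n}, the functions x ↦ max(0, hⁱ(x) − hʲ(x)) and x ↦ max(hⁱ(x), hʲ(x)) are L♮-convex on 𝒳. Define D^j = {(w, y, x) ∈ ℝ × ℝⁿ × ℝⁿ : x ∈ 𝒳, and for every i, w + yᵢ ≥ max(hʲ(x), hⁱ(x)) and yᵢ ≥ max(0, hⁱ(x) − hʲ(x))}. Then the convex hull of D^j equals {(w, y, x) ∈ ℝ × ℝⁿ × ℝⁿ : ℓ ≤ x ≤ u componentwise, and for every i, (x, w + yᵢ) lies in the convex hull of the epigraph {(x′, t) : x′ ∈ 𝒳, t ≥ max(hⁱ(x′), hʲ(x′))} and (x, yᵢ) lies in the convex hull of the epigraph {(x′, t) : x′ ∈ 𝒳, t ≥ max(0, hⁱ(x′) − hʲ(x′))}}. -/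

import Mathlib

/-- Membership in the discrete hyperrectangle `𝒳 = {x ∈ ℤⁿ : l ≤ x ≤ u}`. -/
def inBox {n : ℕ} (l u x : Fin n → ℤ) : Prop := ∀ i, l i ≤ x i ∧ x i ≤ u i

/-- The epigraph `{(x, w) ∈ ℝⁿ × ℝ : x ∈ 𝒳, w ≥ f(x)}` viewed inside `ℝⁿ × ℝ`. -/
def epiSet {n : ℕ} (l u : Fin n → ℤ) (f : (Fin n → ℤ) → ℝ) :
    Set ((Fin n → ℝ) × ℝ) :=
  {q | ∃ x : Fin n → ℤ, inBox l u x ∧ q.1 = (fun i => (x i : ℝ)) ∧ f x ≤ q.2}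

/-- L♮-convexity of `f` on the box `{x ∈ ℤⁿ : l ≤ x ≤ u}`. -/
def IsLNatOn {n : ℕ} (l u : Fin n → ℤ) (f : (Fin n → ℤ) → ℝ) : Prop :=
  ∀ x y : Fin n → ℤ, inBox l u x → inBox l u y → ∀ α : ℤ, 0 ≤ α →
    inBox l u (((fun i => x i - α) : Fin n → ℤ) ⊔ y) →
    inBox l u (x ⊓ ((fun i => y i + α) : Fin n → ℤ)) →
    f x + f y ≥ f (((fun i => x i - α) : Fin n → ℤ) ⊔ y)
      + f (x ⊓ ((fun i => y i + α) : Fin n → ℤ))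

/-- Expectation of `f` under the weights `w` on the box. -/
noncomputable def Ex {n : ℕ} (l u : Fin n → ℤ) (w f : (Fin n → ℤ) → ℝ) : ℝ :=
  ∑ y ∈ Finset.Icc l u, w y * f y

/-- Nonnegative weights supported on the box. -/
def Wt {n : ℕ} (l u : Fin n → ℤ) (w : (Fin n → ℤ) → ℝ) : Prop :=
  (∀ y, 0 ≤ w y) ∧ ∀ y, y ∉ Finset.Icc l u → w y = 0

/-- Probability weights with barycenter `x`. -/
def PX {n : ℕ} (l u : Fin n → ℤ) (x : Fin n → ℝ) (w : (Fin n → ℤ) → ℝ) : Prop :=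
  Wt l u w ∧ Ex l u w (fun _ => 1) = 1 ∧ ∀ i, Ex l u w (fun y => (y i : ℝ)) = x i

/-- The support is a chain of points differing by at most one. -/
def Unc {n : ℕ} (w : (Fin n → ℤ) → ℝ) : Prop :=
  ∀ x y, 0 < w x → 0 < w y → (x ≤ y ∨ y ≤ x) ∧ ∀ i, x i ≤ y i + 1

/-- The strictly convex potential. -/
noncomputable def Phi {n : ℕ} (y : Fin n → ℤ) : ℝ :=
  ∑ i, (y i : ℝ) ^ 2 + ∑ i, ∑ k, ((y i : ℝ) - y k) ^ 2

theorem inBox_iff {n : ℕ} (l u x : Fin n → ℤ) : inBox l u x ↔ x ∈ Finset.Icc l u := by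
  simp only [inBox, Finset.mem_Icc, Pi.le_def]
  exact ⟨fun h => ⟨fun i => (h i).1, fun i => (h i).2⟩, fun h i => ⟨h.1 i, h.2 i⟩⟩

theorem Ex_add {n : ℕ} (l u : Fin n → ℤ) (w v f : (Fin n → ℤ) → ℝ) :
    Ex l u (w + v) f = Ex l u w f + Ex l u v f := by
  simp [Ex, add_mul, Finset.sum_add_distrib]

theorem Ex_sub {n : ℕ} (l u : Fin n → ℤ) (w v f : (Fin n → ℤ) → ℝ) :
    Ex l u (w - v) f = Ex l u w f - Ex l u v f := by
  simp [Ex, sub_mul, Finset.sum_sub_distrib]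

theorem Ex_smul {n : ℕ} (l u : Fin n → ℤ) (a : ℝ) (w f : (Fin n → ℤ) → ℝ) :
    Ex l u (a • w) f = a * Ex l u w f := by
  simp [Ex, mul_assoc, Finset.mul_sum]

theorem Ex_single {n : ℕ} (l u : Fin n → ℤ) (z : Fin n → ℤ) (hz : z ∈ Finset.Icc l u) (c : ℝ)
    (f : (Fin n → ℤ) → ℝ) :
    Ex l u (Pi.single z c) f = c * f z := by
  unfold Ex
  rw [Finset.sum_eq_single z]
  · simp
  · intro b _ hb
    simp [Pi.single_apply, hb]
  · intro h; exact absurd hz h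

theorem top_exists {n : ℕ} (l u : Fin n → ℤ) (w : (Fin n → ℤ) → ℝ) (hw : Wt l u w) (hu : Unc w)
    (m : ℝ) (hm : Ex l u w (fun _ => 1) = m) (hpos : 0 < m) :
    ∃ y, 0 < w y ∧ ∀ i, m * ((y i : ℝ) - 1) < Ex l u w (fun y => (y i : ℝ)) ∧
      Ex l u w (fun y => (y i : ℝ)) ≤ m * y i := by
  have hne : ((Finset.Icc l u).filter (fun y => 0 < w y)).Nonempty := by
    by_contra hcon
    rw [Finset.not_nonempty_iff_eq_empty, Finset.filter_eq_empty_iff] at hcon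
    have : Ex l u w (fun _ => 1) = 0 := by
      unfold Ex
      apply Finset.sum_eq_zero
      intro y hy
      have h1 := hcon hy
      have h2 := hw.1 y
      have : w y = 0 := le_antisymm (not_lt.mp h1) h2
      simp [this]
    linarith
  obtain ⟨y, hy⟩ := Finset.exists_maximal hne
  have hyS : y ∈ (Finset.Icc l u).filter (fun y => 0 < w y) := hy.1
  rw [Finset.mem_filter] at hyS
  have hge : ∀ z, 0 < w z → z ≤ y := by
    intro z hz
    rcases (hu z y hz hyS.2).1 with h | h
    · exact h
    · refine hy.2 (Finset.mem_filter.2 ⟨?_, hz⟩) h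
      by_contra hb
      exact hz.ne' (hw.2 z hb)
  refine ⟨y, hyS.2, fun i => ⟨?_, ?_⟩⟩
  · have : 0 < ∑ z ∈ Finset.Icc l u, w z * ((z i : ℝ) - y i + 1) := by
      apply Finset.sum_pos'
      · intro z _
        rcases (hw.1 z).eq_or_lt with h | h
        · simp [← h]
        · have := (hu y z hyS.2 h).2 i
          have : (y i : ℝ) ≤ z i + 1 := by exact_mod_cast this
          exact mul_nonneg h.le (by linarith)
      · exact ⟨y, hyS.1, by simpa using hyS.2⟩
    have e : ∑ z ∈ Finset.Icc l u, w z * ((z i : ℝ) - y i + 1)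
        = Ex l u w (fun y => (y i : ℝ)) - m * ((y i : ℝ) - 1) := by
      rw [← hm]
      unfold Ex
      rw [Finset.sum_mul, ← Finset.sum_sub_distrib]
      apply Finset.sum_congr rfl
      intro z _
      ring
    linarith
  · rw [← hm]
    unfold Ex
    rw [Finset.sum_mul]
    apply Finset.sum_le_sum
    intro z _
    rcases (hw.1 z).eq_or_lt with h | h
    · simp [← h]
    · have := hge z h i
      have : (z i : ℝ) ≤ y i := by exact_mod_cast this
      have := mul_le_mul_of_nonneg_left this h.le
      linarith

theorem sub_single_pos {n : ℕ} (w : (Fin n → ℤ) → ℝ) (y : Fin n → ℤ) (c : ℝ) (hc : 0 ≤ c)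
    (z : Fin n → ℤ) (hz : 0 < (w - Pi.single y c : (Fin n → ℤ) → ℝ) z) : 0 < w z := by
  rw [Pi.sub_apply, Pi.single_apply] at hz
  split_ifs at hz <;> linarith

theorem sub_single_good {n : ℕ} (l u : Fin n → ℤ) (w : (Fin n → ℤ) → ℝ) (hw : Wt l u w)
    (hu : Unc w) (y : Fin n → ℤ) (hy : y ∈ Finset.Icc l u) (c : ℝ) (hc : 0 ≤ c) (hcw : c ≤ w y) :
    Wt l u (w - Pi.single y c) ∧ Unc (w - Pi.single y c) := by
  refine ⟨⟨?_, ?_⟩, ?_⟩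
  · intro z
    rw [Pi.sub_apply, Pi.single_apply]
    split_ifs with h
    · subst h; linarith
    · have := hw.1 z; linarith
  · intro z hz
    have : z ≠ y := by rintro rfl; exact hz hy
    simp [Pi.single_apply, this, hw.2 z hz]
  · intro a b ha hb
    exact hu a b (sub_single_pos w y c hc a ha) (sub_single_pos w y c hc b hb)

theorem uniq {n : ℕ} (l u : Fin n → ℤ) (N : ℕ) : ∀ (w v : (Fin n → ℤ) → ℝ),
    Wt l u w → Wt l u v → Unc w → Unc v →
    Ex l u w (fun _ => 1) = Ex l u v (fun _ => 1) →
    (∀ i, Ex l u w (fun y => (y i : ℝ)) = Ex l u v (fun y => (y i : ℝ))) →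
    ((Finset.Icc l u).filter (fun y => 0 < w y)).card
      + ((Finset.Icc l u).filter (fun y => 0 < v y)).card < N → w = v := by
  induction N with
  | zero => intro w v _ _ _ _ _ _ h; omega
  | succ N ih =>
    intro w v hw hv uw uv hm hx hN
    have hm0 : 0 ≤ Ex l u w (fun _ => 1) :=
      Finset.sum_nonneg (fun y _ => by simpa using hw.1 y)
    rcases hm0.eq_or_lt with h0 | hpos
    · have key : ∀ w, Wt l u w → Ex l u w (fun _ => 1) = 0 → w = 0 := by
        intro w hw h
        unfold Ex at h
        rw [Finset.sum_eq_zero_iff_of_nonneg (fun y _ => by simpa using hw.1 y)] at h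
        funext y
        by_cases hy : y ∈ Finset.Icc l u
        · simpa using h y hy
        · simpa using hw.2 y hy
      rw [key w hw h0.symm, key v hv (by rw [← hm]; exact h0.symm)]
    · obtain ⟨y, hy, hyb⟩ := top_exists l u w hw uw _ rfl hpos
      obtain ⟨z, hz, hzb⟩ := top_exists l u v hv uv _ hm.symm hpos
      have hyz : y = z := by
        funext i
        have h1 := lt_of_mul_lt_mul_left
          ((hyb i).1.trans_le ((hx i).le.trans (hzb i).2)) hpos.le
        have h2 := lt_of_mul_lt_mul_left
          ((hzb i).1.trans_le ((hx i).ge.trans (hyb i).2)) hpos.le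
        have h1' : y i - 1 < z i := by exact_mod_cast h1
        have h2' : z i - 1 < y i := by exact_mod_cast h2
        omega
      subst hyz
      have hyB : y ∈ Finset.Icc l u := by
        by_contra hb
        exact hy.ne' (hw.2 y hb)
      have hc : 0 < min (w y) (v y) := lt_min hy hz
      set c := min (w y) (v y) with hcdef
      have gw := sub_single_good l u w hw uw y hyB c hc.le (min_le_left _ _)
      have gv := sub_single_good l u v hv uv y hyB c hc.le (min_le_right _ _)
      have sw : (Finset.Icc l u).filter (fun z => 0 < (w - Pi.single y c : (Fin n → ℤ) → ℝ) z) ⊆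
          (Finset.Icc l u).filter (fun z => 0 < w z) :=
        Finset.monotone_filter_right _ (fun z _ h => sub_single_pos w y c hc.le z h)
      have sv : (Finset.Icc l u).filter (fun z => 0 < (v - Pi.single y c : (Fin n → ℤ) → ℝ) z) ⊆
          (Finset.Icc l u).filter (fun z => 0 < v z) :=
        Finset.monotone_filter_right _ (fun z _ h => sub_single_pos v y c hc.le z h)
      have h := ih (w - Pi.single y c) (v - Pi.single y c) gw.1 gv.1 gw.2 gv.2
        (by rw [Ex_sub, Ex_sub, hm]) (fun i => by rw [Ex_sub, Ex_sub, hx]) (by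
          have cw := Finset.card_le_card sw
          have cv := Finset.card_le_card sv
          rcases le_total (w y) (v y) with hle | hle
          · have : c = w y := min_eq_left hle
            have : (Finset.Icc l u).filter (fun z => 0 < (w - Pi.single y c : (Fin n → ℤ) → ℝ) z) ⊂
              (Finset.Icc l u).filter (fun z => 0 < w z) := by
              refine Finset.ssubset_iff_of_subset sw |>.mpr ⟨y, ?_, ?_⟩
              · simp only [Finset.mem_filter]; exact ⟨hyB, hy⟩
              · simp [this]
            have := Finset.card_lt_card this
            omega
          · have : c = v y := min_eq_right hle
            have : (Finset.Icc l u).filter (fun z => 0 < (v - Pi.single y c : (Fin n → ℤ) → ℝ) z) ⊂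
              (Finset.Icc l u).filter (fun z => 0 < v z) := by
              refine Finset.ssubset_iff_of_subset sv |>.mpr ⟨y, ?_, ?_⟩
              · simp only [Finset.mem_filter]; exact ⟨hyB, hz⟩
              · simp [this]
            have := Finset.card_lt_card this
            omega)
      exact sub_left_injective h

/-- The two uncrossed points. -/
def upP {n : ℕ} (x y : Fin n → ℤ) (α : ℤ) : Fin n → ℤ := ((fun i => x i - α) : Fin n → ℤ) ⊔ y
def dnP {n : ℕ} (x y : Fin n → ℤ) (α : ℤ) : Fin n → ℤ := x ⊓ ((fun i => y i + α) : Fin n → ℤ)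

theorem up_eq {n : ℕ} (x y : Fin n → ℤ) (α : ℤ) (i : Fin n) :
    upP x y α i = y i + max (x i - α - y i) 0 := by
  simp only [upP, Pi.sup_apply]; omega

theorem dn_eq {n : ℕ} (x y : Fin n → ℤ) (α : ℤ) (i : Fin n) :
    dnP x y α i = x i - max (x i - α - y i) 0 := by
  simp only [dnP, Pi.inf_apply]; omega

theorem sq_term (x y a α : ℤ) (hα : 0 ≤ α) (ha : a = max (x - α - y) 0) :
    (y + a) ^ 2 + (x - a) ^ 2 ≤ x ^ 2 + y ^ 2 ∧
    (0 < α → α < x - y → (y + a) ^ 2 + (x - a) ^ 2 < x ^ 2 + y ^ 2) := by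
  rcases le_total (x - α - y) 0 with h | h
  · rw [max_eq_right h] at ha
    subst ha
    exact ⟨by nlinarith, fun _ _ => by omega⟩
  · rw [max_eq_left h] at ha
    subst ha
    exact ⟨by nlinarith [mul_nonneg h hα], fun h1 h2 => by
      nlinarith [mul_pos h1 (by omega : 0 < x - α - y)]⟩

theorem pair_term (x y x' y' α a b : ℤ) (ha : a = max (x - α - y) 0)
    (hb : b = max (x' - α - y') 0) :
    ((y + a) - (y' + b)) ^ 2 + ((x - a) - (x' - b)) ^ 2 ≤ (x - x') ^ 2 + (y - y') ^ 2 ∧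
    (0 < x - α - y → x' - α - y' < 0 →
    ((y + a) - (y' + b)) ^ 2 + ((x - a) - (x' - b)) ^ 2 < (x - x') ^ 2 + (y - y') ^ 2) := by
  obtain ⟨D, hD⟩ : ∃ D, D = x - α - y := ⟨_, rfl⟩
  obtain ⟨D', hD'⟩ : ∃ D', D' = x' - α - y' := ⟨_, rfl⟩
  rw [← hD] at ha ⊢
  rw [← hD'] at hb ⊢
  have hx : x = D + α + y := by omega
  have hx' : x' = D' + α + y' := by omega
  subst hx hx'
  rcases le_total D 0 with h | h <;> rcases le_total D' 0 with h' | h'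
  · rw [max_eq_right h] at ha; rw [max_eq_right h'] at hb; subst ha hb
    exact ⟨by nlinarith, fun _ _ => by omega⟩
  · rw [max_eq_right h] at ha; rw [max_eq_left h'] at hb; subst ha hb
    exact ⟨by nlinarith [mul_nonneg (neg_nonneg.mpr h) h'], fun _ _ => by omega⟩
  · rw [max_eq_left h] at ha; rw [max_eq_right h'] at hb; subst ha hb
    exact ⟨by nlinarith [mul_nonneg (neg_nonneg.mpr h') h], fun h1 h2 => by
      nlinarith [mul_pos (neg_pos.mpr h2) h1]⟩
  · rw [max_eq_left h] at ha; rw [max_eq_left h'] at hb; subst ha hb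
    exact ⟨by nlinarith, fun _ _ => by omega⟩

theorem phi_strict {n : ℕ} (x y : Fin n → ℤ) (α : ℤ) (hα : 0 ≤ α)
    (h : (∃ i, 0 < α ∧ α < x i - y i) ∨ (∃ i k, 0 < x i - α - y i ∧ x k - α - y k < 0)) :
    Phi (upP x y α) + Phi (dnP x y α) < Phi x + Phi y := by
  have s1 : ∀ i, (upP x y α i : ℝ) ^ 2 + (dnP x y α i : ℝ) ^ 2 ≤ (x i : ℝ) ^ 2 + (y i : ℝ) ^ 2 := by
    intro i
    have := (sq_term (x i) (y i) _ α hα rfl).1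
    rw [← up_eq, ← dn_eq] at this
    exact_mod_cast this
  have s2 : ∀ i k, ((upP x y α i : ℝ) - upP x y α k) ^ 2 + ((dnP x y α i : ℝ) - dnP x y α k) ^ 2 ≤
      ((x i : ℝ) - x k) ^ 2 + ((y i : ℝ) - y k) ^ 2 := by
    intro i k
    have := (pair_term (x i) (y i) (x k) (y k) α _ _ rfl rfl).1
    rw [← up_eq, ← dn_eq, ← up_eq, ← dn_eq] at this
    exact_mod_cast this
  have e : ∀ a b : Fin n → ℤ, Phi a + Phi b = ∑ i, ((a i : ℝ) ^ 2 + (b i : ℝ) ^ 2)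
      + ∑ i, ∑ k, (((a i : ℝ) - a k) ^ 2 + ((b i : ℝ) - b k) ^ 2) := by
    intro a b
    simp only [Phi, Finset.sum_add_distrib]
    ring
  rw [e, e]
  rcases h with ⟨i, h1, h2⟩ | ⟨i, k, h1, h2⟩
  · apply add_lt_add_of_lt_of_le
    · apply Finset.sum_lt_sum (fun i _ => s1 i)
      refine ⟨i, Finset.mem_univ _, ?_⟩
      have := (sq_term (x i) (y i) _ α hα rfl).2 h1 h2
      rw [← up_eq, ← dn_eq] at this
      exact_mod_cast this
    · exact Finset.sum_le_sum (fun i _ => Finset.sum_le_sum (fun k _ => s2 i k))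
  · apply add_lt_add_of_le_of_lt
    · exact Finset.sum_le_sum (fun i _ => s1 i)
    · apply Finset.sum_lt_sum (fun i _ => Finset.sum_le_sum (fun k _ => s2 i k))
      refine ⟨i, Finset.mem_univ _, ?_⟩
      apply Finset.sum_lt_sum (fun k _ => s2 i k)
      refine ⟨k, Finset.mem_univ _, ?_⟩
      have := (pair_term (x i) (y i) (x k) (y k) α _ _ rfl rfl).2 h1 h2
      rw [← up_eq, ← dn_eq, ← up_eq, ← dn_eq] at this
      exact_mod_cast this

theorem up_mem {n : ℕ} (l u x y : Fin n → ℤ) (hx : x ∈ Finset.Icc l u) (hy : y ∈ Finset.Icc l u)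
    (α : ℤ) (hα : 0 ≤ α) : upP x y α ∈ Finset.Icc l u := by
  rw [← inBox_iff] at *
  intro i
  have := hx i
  have := hy i
  rw [up_eq]
  omega

theorem dn_mem {n : ℕ} (l u x y : Fin n → ℤ) (hx : x ∈ Finset.Icc l u) (hy : y ∈ Finset.Icc l u)
    (α : ℤ) (hα : 0 ≤ α) : dnP x y α ∈ Finset.Icc l u := by
  rw [← inBox_iff] at *
  intro i
  have := hx i
  have := hy i
  rw [dn_eq]
  omega

/-- Uncrossing exchange. -/
theorem swap {n : ℕ} (l u : Fin n → ℤ) (X : Fin n → ℝ) (w : (Fin n → ℤ) → ℝ) (hw : PX l u X w)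
    (x y : Fin n → ℤ) (hx : 0 < w x) (hy : 0 < w y) (α : ℤ) (hα : 0 ≤ α) :
    ∃ ε : ℝ, 0 < ε ∧ ∃ w', PX l u X w' ∧ ∀ f, Ex l u w' f = Ex l u w f
      + ε * (f (upP x y α) + f (dnP x y α) - f x - f y) := by
  have hxB : x ∈ Finset.Icc l u := by
    by_contra hb; exact hx.ne' (hw.1.2 x hb)
  have hyB : y ∈ Finset.Icc l u := by
    by_contra hb; exact hy.ne' (hw.1.2 y hb)
  have huB := up_mem l u x y hxB hyB α hα
  have hdB := dn_mem l u x y hxB hyB α hα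
  have hm : 0 < min (w x) (w y) := lt_min hx hy
  obtain ⟨ε, hε⟩ : ∃ ε, ε = min (w x) (w y) / 2 := ⟨_, rfl⟩
  have hε0 : 0 < ε := by linarith
  have h1 : 2 * ε ≤ w x := by have := min_le_left (w x) (w y); linarith
  have h2 : 2 * ε ≤ w y := by have := min_le_right (w x) (w y); linarith
  have hE : ∀ f, Ex l u (w + Pi.single (upP x y α) ε + Pi.single (dnP x y α) ε
      - Pi.single x ε - Pi.single y ε) f = Ex l u w f
      + ε * (f (upP x y α) + f (dnP x y α) - f x - f y) := by
    intro f
    rw [Ex_sub, Ex_sub, Ex_add, Ex_add, Ex_single _ _ _ huB, Ex_single _ _ _ hdB,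
      Ex_single _ _ _ hxB, Ex_single _ _ _ hyB]
    ring
  refine ⟨ε, hε0, _, ⟨⟨?_, ?_⟩, ?_, ?_⟩, hE⟩
  · intro z
    have hz := hw.1.1 z
    have p : ∀ a : Fin n → ℤ, 0 ≤ (Pi.single a ε : (Fin n → ℤ) → ℝ) z := by
      intro a
      rw [Pi.single_apply]; split_ifs <;> linarith
    have p1 := p (upP x y α)
    have p2 := p (dnP x y α)
    have p3 : (Pi.single x ε : (Fin n → ℤ) → ℝ) z + (Pi.single y ε : (Fin n → ℤ) → ℝ) z ≤ w z := by
      rw [Pi.single_apply, Pi.single_apply]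
      split_ifs with a b b
      · rw [a]; linarith
      · rw [a]; linarith
      · rw [b]; linarith
      · linarith
    simp only [Pi.add_apply, Pi.sub_apply]
    linarith
  · intro z hz
    have p : ∀ a ∈ Finset.Icc l u, (Pi.single a ε : (Fin n → ℤ) → ℝ) z = 0 := by
      intro a ha
      rw [Pi.single_apply, if_neg]
      rintro rfl
      exact hz ha
    simp only [Pi.add_apply, Pi.sub_apply]
    rw [p _ huB, p _ hdB, p _ hxB, p _ hyB, hw.1.2 z hz]
    simp
  · rw [hE, hw.2.1]; ring
  · intro i
    rw [hE, hw.2.2, up_eq, dn_eq]; push_cast; ring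

theorem Ex_cont {n : ℕ} (l u : Fin n → ℤ) (f : (Fin n → ℤ) → ℝ) :
    Continuous (fun w => Ex l u w f) := by
  unfold Ex
  fun_prop

theorem PX_compact {n : ℕ} (l u : Fin n → ℤ) (X : Fin n → ℝ) : IsCompact {w | PX l u X w} := by
  have hc : IsCompact (Set.Icc (0 : (Fin n → ℤ) → ℝ)
    (fun y => if y ∈ Finset.Icc l u then 1 else 0)) := isCompact_Icc
  have h1 : IsClosed {w : (Fin n → ℤ) → ℝ | Ex l u w (fun _ => 1) = 1 ∧
      ∀ i, Ex l u w (fun y => (y i : ℝ)) = X i} := by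
    rw [Set.ofPred_and, Set.ofPred_forall]
    exact (isClosed_eq (Ex_cont l u _) continuous_const).inter
      (isClosed_iInter fun i => isClosed_eq (Ex_cont l u _) continuous_const)
  convert hc.inter_right h1 using 1
  ext w
  constructor
  · rintro ⟨hw, h2, h3⟩
    refine ⟨⟨hw.1, fun y => ?_⟩, h2, h3⟩
    dsimp only
    split_ifs with hy
    · rw [← h2]
      unfold Ex
      simp only [mul_one]
      exact Finset.single_le_sum (fun z _ => hw.1 z) hy
    · exact (hw.2 y hy).le
  · rintro ⟨⟨h0, h1⟩, h2, h3⟩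
    refine ⟨⟨h0, fun y hy => le_antisymm ?_ (h0 y)⟩, h2, h3⟩
    have := h1 y
    simpa only [if_neg hy] using this

theorem opt_exists {n : ℕ} (l u : Fin n → ℤ) (X : Fin n → ℝ) (hne : ∃ w, PX l u X w)
    (f : (Fin n → ℤ) → ℝ) (hf : IsLNatOn l u f) :
    ∃ w, PX l u X w ∧ Unc w ∧ ∀ v, PX l u X v → Ex l u w f ≤ Ex l u v f := by
  have hc := PX_compact l u X
  obtain ⟨w0, hw0, hmin0⟩ := hc.exists_isMinOn hne (Ex_cont l u f).continuousOn
  have hc2 : IsCompact ({w | PX l u X w} ∩ {w | Ex l u w f ≤ Ex l u w0 f}) :=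
    hc.inter_right (isClosed_le (Ex_cont l u f) continuous_const)
  obtain ⟨w, hw, hmin⟩ := hc2.exists_isMinOn ⟨w0, hw0, le_refl (Ex l u w0 f)⟩
    (Ex_cont l u Phi).continuousOn
  have hopt : ∀ v, PX l u X v → Ex l u w f ≤ Ex l u v f := fun v hv =>
    le_trans hw.2 (hmin0 hv)
  refine ⟨w, hw.1, ?_, hopt⟩
  have key : ∀ x y, 0 < w x → 0 < w y → ∀ α : ℤ, 0 ≤ α →
      ¬ Phi (upP x y α) + Phi (dnP x y α) < Phi x + Phi y := by
    intro x y hx hy α hα hlt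
    obtain ⟨ε, hε, w', hw', hE⟩ := swap l u X w hw.1 x y hx hy α hα
    have hxB : x ∈ Finset.Icc l u := by
      by_contra hb; exact hx.ne' (hw.1.1.2 x hb)
    have hyB : y ∈ Finset.Icc l u := by
      by_contra hb; exact hy.ne' (hw.1.1.2 y hb)
    have hL : f x + f y ≥ f (upP x y α) + f (dnP x y α) :=
      hf x y ((inBox_iff _ _ _).2 hxB) ((inBox_iff _ _ _).2 hyB) α hα
        ((inBox_iff _ _ _).2 (up_mem l u x y hxB hyB α hα))
        ((inBox_iff _ _ _).2 (dn_mem l u x y hxB hyB α hα))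
    have h1 : Ex l u w' f ≤ Ex l u w0 f := by
      refine le_trans ?_ hw.2
      rw [hE]
      have := mul_nonneg hε.le (sub_nonneg.mpr hL)
      linarith
    have h2 : Ex l u w Phi ≤ Ex l u w' Phi := hmin ⟨hw', h1⟩
    rw [hE] at h2
    have := mul_pos hε (sub_pos.mpr hlt)
    linarith
  intro x y hx hy
  constructor
  · by_contra hcon
    push Not at hcon
    obtain ⟨h1, h2⟩ := hcon
    rw [Pi.le_def] at h1 h2
    push Not at h1 h2
    obtain ⟨i, hi⟩ := h1
    obtain ⟨k, hk⟩ := h2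
    exact key x y hx hy 0 le_rfl (phi_strict x y 0 le_rfl
      (Or.inr ⟨i, k, by omega, by omega⟩))
  · intro i
    by_contra hcon
    exact key x y hx hy 1 zero_le_one (phi_strict x y 1 zero_le_one
      (Or.inl ⟨i, by omega, by omega⟩))

theorem common_opt {n : ℕ} (l u : Fin n → ℤ) (X : Fin n → ℝ) (hne : ∃ w, PX l u X w) :
    ∃ w, PX l u X w ∧ ∀ f, IsLNatOn l u f → ∀ v, PX l u X v → Ex l u w f ≤ Ex l u v f := by
  obtain ⟨w, hw, uw, -⟩ := opt_exists l u X hne (fun _ => 0) (by intro x y _ _ α _ _ _; simp)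
  refine ⟨w, hw, fun f hf v hv => ?_⟩
  obtain ⟨w', hw', uw', ho⟩ := opt_exists l u X hne f hf
  have : w = w' := uniq l u _ w w' hw.1 hw'.1 uw uw' (by rw [hw.2.1, hw'.2.1])
    (fun i => by rw [hw.2.2, hw'.2.2]) (Nat.lt_succ_self _)
  rw [this]
  exact ho v hv

theorem hull_epi {n : ℕ} (l u : Fin n → ℤ) (f : (Fin n → ℤ) → ℝ) (p : (Fin n → ℝ) × ℝ)
    (hp : p ∈ convexHull ℝ (epiSet l u f)) : ∃ w, PX l u p.1 w ∧ Ex l u w f ≤ p.2 := by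
  have : convexHull ℝ (epiSet l u f) ⊆ {p | ∃ w, PX l u p.1 w ∧ Ex l u w f ≤ p.2} := by
    apply convexHull_min
    · rintro q ⟨x, hx, h1, h2⟩
      rw [inBox_iff] at hx
      refine ⟨Pi.single x 1, ⟨⟨?_, ?_⟩, ?_, ?_⟩, ?_⟩
      · intro y
        rw [Pi.single_apply]; split_ifs <;> norm_num
      · intro y hy
        rw [Pi.single_apply, if_neg]
        rintro rfl; exact hy hx
      · rw [Ex_single _ _ _ hx]; simp
      · intro i
        rw [Ex_single _ _ _ hx, h1]; simp
      · rw [Ex_single _ _ _ hx]; simpa using h2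
    · rintro p ⟨w, hw, hwf⟩ q ⟨v, hv, hvf⟩ a b ha hb hab
      refine ⟨a • w + b • v, ⟨⟨?_, ?_⟩, ?_, ?_⟩, ?_⟩
      · intro y
        exact add_nonneg (mul_nonneg ha (hw.1.1 y)) (mul_nonneg hb (hv.1.1 y))
      · intro y hy
        simp [hw.1.2 y hy, hv.1.2 y hy]
      · rw [Ex_add, Ex_smul, Ex_smul, hw.2.1, hv.2.1]; linarith
      · intro i
        rw [Ex_add, Ex_smul, Ex_smul, hw.2.2, hv.2.2]; simp
      · rw [Ex_add, Ex_smul, Ex_smul]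
        exact add_le_add (mul_le_mul_of_nonneg_left hwf ha) (mul_le_mul_of_nonneg_left hvf hb)
  exact this hp

/-- The convex hull of
`D^j = {(w, y, x) : x ∈ 𝒳, w + yᵢ ≥ max(hʲ(x), hⁱ(x)), yᵢ ≥ max(0, hⁱ(x) − hʲ(x)) ∀ i}`
is the intersection of the trivial bounds with the epigraph convex hulls of the
functions `max(hⁱ, hʲ)` and `max(0, hⁱ − hʲ)`, provided these are L♮-convex on `𝒳`. -/
theorem stmt_14 (n : ℕ) (l u : Fin n → ℤ) (hlu : ∀ i, l i ≤ u i)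
    (h : Fin n → (Fin n → ℤ) → ℝ) (j : Fin n)
    (hconv : ∀ i : Fin n,
      IsLNatOn l u (fun x => max 0 (h i x - h j x)) ∧
      IsLNatOn l u (fun x => max (h i x) (h j x))) :
    convexHull ℝ
        {q : ℝ × (Fin n → ℝ) × (Fin n → ℝ) | ∃ z : Fin n → ℤ,
          inBox l u z ∧ q.2.2 = (fun i => (z i : ℝ)) ∧
          ∀ i, max (h j z) (h i z) ≤ q.1 + q.2.1 i ∧
            max 0 (h i z - h j z) ≤ q.2.1 i}
      = {q : ℝ × (Fin n → ℝ) × (Fin n → ℝ) |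
          (∀ i, (l i : ℝ) ≤ q.2.2 i ∧ q.2.2 i ≤ (u i : ℝ)) ∧
          ∀ i : Fin n,
            (q.2.2, q.1 + q.2.1 i) ∈
              convexHull ℝ (epiSet l u (fun z => max (h i z) (h j z))) ∧
            (q.2.2, q.2.1 i) ∈
              convexHull ℝ (epiSet l u (fun z => max 0 (h i z - h j z)))} := by
  apply Set.Subset.antisymm
  · apply convexHull_min
    · rintro q ⟨z, hz, h1, h2⟩
      refine ⟨fun i => ?_, fun i => ⟨?_, ?_⟩⟩
      · rw [h1]
        exact ⟨Int.cast_le.2 (hz i).1, Int.cast_le.2 (hz i).2⟩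
      · apply subset_convexHull
        refine ⟨z, hz, h1, ?_⟩
        have := (h2 i).1
        rw [max_comm] at this
        exact this
      · apply subset_convexHull
        exact ⟨z, hz, h1, (h2 i).2⟩
    · rintro p ⟨hp1, hp2⟩ q ⟨hq1, hq2⟩ a b ha hb hab
      refine ⟨fun i => ?_, fun i => ⟨?_, ?_⟩⟩
      · have e : (a • p + b • q).2.2 i = a * p.2.2 i + b * q.2.2 i := by simp
        rw [e]
        obtain ⟨h1, h2⟩ := hp1 i
        obtain ⟨h3, h4⟩ := hq1 i
        obtain rfl : b = 1 - a := by linarith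
        constructor
        · nlinarith [mul_le_mul_of_nonneg_left h1 ha, mul_le_mul_of_nonneg_left h3 hb]
        · nlinarith [mul_le_mul_of_nonneg_left h2 ha, mul_le_mul_of_nonneg_left h4 hb]
      · have := convex_convexHull ℝ _ (hp2 i).1 (hq2 i).1 ha hb hab
        convert this using 1
        ext
        · simp
        · simp; ring
      · have := convex_convexHull ℝ _ (hp2 i).2 (hq2 i).2 ha hb hab
        convert this using 1
        ext <;> simp
  · rintro ⟨w, y, x⟩ ⟨-, hq⟩
    dsimp only at hq
    obtain ⟨w0, hw0, -⟩ := hull_epi l u _ _ (hq j).1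
    obtain ⟨m, hm, hopt⟩ := common_opt l u x ⟨w0, hw0⟩
    have hF : ∀ i, Ex l u m (fun z => max (h i z) (h j z)) ≤ w + y i := by
      intro i
      obtain ⟨v, hv, hv2⟩ := hull_epi l u _ _ (hq i).1
      exact (hopt _ (hconv i).2 v hv).trans hv2
    have hG : ∀ i, Ex l u m (fun z => max 0 (h i z - h j z)) ≤ y i := by
      intro i
      obtain ⟨v, hv, hv2⟩ := hull_epi l u _ _ (hq i).2
      exact (hopt _ (hconv i).1 v hv).trans hv2
    have hid : ∀ i z, max (h i z) (h j z) = h j z + max 0 (h i z - h j z) := by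
      intro i z
      rw [← max_add_add_left]
      rw [max_comm]; congr 1 <;> ring
    have hFG : ∀ i, Ex l u m (fun z => max (h i z) (h j z))
        = Ex l u m (h j) + Ex l u m (fun z => max 0 (h i z - h j z)) := by
      intro i
      simp only [hid, Ex, mul_add, Finset.sum_add_distrib]
    have hone : ∑ z ∈ Finset.Icc l u, m z = 1 := by
      have := hm.2.1
      simpa [Ex] using this
    let P : (Fin n → ℤ) → ℝ × (Fin n → ℝ) × (Fin n → ℝ) := fun z =>
      (h j z + (w - Ex l u m (h j)),
        (fun i => max 0 (h i z - h j z) + (y i - Ex l u m (fun z => max 0 (h i z - h j z)))),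
        fun i => (z i : ℝ))
    have hsum : ∑ z ∈ Finset.Icc l u, m z • P z = (w, y, x) := by
      refine Prod.ext ?_ (Prod.ext ?_ ?_)
      · rw [Prod.fst_sum]
        simp only [P, Prod.smul_fst, smul_eq_mul, mul_add, Finset.sum_add_distrib,
          ← Finset.sum_mul, hone]
        simp only [Ex]; ring
      · rw [Prod.snd_sum, Prod.fst_sum]
        funext i
        rw [Finset.sum_apply]
        simp only [P, Prod.smul_fst, Prod.smul_snd, Pi.smul_apply, smul_eq_mul, mul_add,
          Finset.sum_add_distrib, ← Finset.sum_mul, hone]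
        simp only [Ex]; ring
      · rw [Prod.snd_sum, Prod.snd_sum]
        funext i
        rw [Finset.sum_apply]
        exact hm.2.2 i
    rw [← hsum]
    apply (convex_convexHull ℝ _).sum_mem (fun z _ => hm.1.1 z) hone
    intro z hz
    apply subset_convexHull
    refine ⟨z, (inBox_iff _ _ _).2 hz, rfl, fun i => ⟨?_, ?_⟩⟩
    · rw [max_comm, hid]
      have := hF i
      rw [hFG] at this
      simp only [P]
      linarith
    · have := hG i
      simp only [P]
      linarith
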